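/- There exist ε₀ > 0 and C > 0 such that for all ε ∈ (0, ε₀) and every u ∈ H¹([−1,1]) one has u(1)² + u(−1)² ≤ C ε ( Q₀(u) + ∫_{−1}^{1} u(r)² dr ). -/

import Mathlib

open Filter MeasureTheory

/-- `f_A(ρ) = (ρ² − a²)(ρ² − b²)(2ρ² − a² − b²) + 2((2ρ² − a² − b²)² + 2(ρ² − a²)(ρ² − b²))ρ²`. -/
noncomputable def fA (a b ρ : ℝ) : ℝ :=
  (ρ ^ 2 - a ^ 2) * (ρ ^ 2 - b ^ 2) * (2 * ρ ^ 2 - a ^ 2 - b ^ 2)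
    + 2 * ((2 * ρ ^ 2 - a ^ 2 - b ^ 2) ^ 2
        + 2 * (ρ ^ 2 - a ^ 2) * (ρ ^ 2 - b ^ 2)) * ρ ^ 2

/-- The quadratic form `Q₀(u) = ∫_{−1}^{1} (u'(r)² + ε⁻² f_A(ρ₀(r/ε)) u(r)²) dr`, written for
a function `u` with (weak) derivative `g`. -/
noncomputable def Q0 (a b ε : ℝ) (ρ₀ u g : ℝ → ℝ) : ℝ :=
  ∫ r in (-1:ℝ)..1, ((g r) ^ 2 + (ε ^ 2)⁻¹ * fA a b (ρ₀ (r / ε)) * (u r) ^ 2)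

lemma aux_int (W V u g : ℝ → ℝ) (hW : ContDiff ℝ 1 W) (hV : Continuous V)
    (hWV : ∀ r ∈ Set.Icc (-1:ℝ) 1, deriv W r + W r ^ 2 ≤ V r)
    (hg : IntervalIntegrable g volume (-1) 1)
    (hg2 : IntervalIntegrable (fun r => (g r) ^ 2) volume (-1) 1)
    (hu : ∀ x ∈ Set.Icc (-1:ℝ) 1, u x = u (-1) + ∫ t in (-1:ℝ)..x, g t) :
    ContinuousOn u (Set.Icc (-1:ℝ) 1) ∧
    W 1 * u 1 ^ 2 - W (-1) * u (-1) ^ 2 ≤ ∫ r in (-1:ℝ)..1, (g r ^ 2 + V r * u r ^ 2) := by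
  have h11 : (-1:ℝ) ≤ 1 := by norm_num
  set U : ℝ → ℝ := fun x => u (-1) + ∫ t in (-1:ℝ)..x, g t with hU
  have hc : AbsolutelyContinuousOnInterval (fun _ : ℝ => u (-1)) (-1) 1 :=
    ContDiffOn.absolutelyContinuousOnInterval contDiffOn_const
  have hUac : AbsolutelyContinuousOnInterval U (-1) 1 :=
    hc.add (hg.absolutelyContinuousOnInterval_intervalIntegral (by simp))
  have hWac : AbsolutelyContinuousOnInterval W (-1) 1 :=
    ContDiffOn.absolutelyContinuousOnInterval hW.contDiffOn
  have hFac : AbsolutelyContinuousOnInterval (fun r => U r * U r * W r) (-1) 1 :=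
    (hUac.mul hUac).mul hWac
  have hUc : ContinuousOn U (Set.uIcc (-1:ℝ) 1) := hUac.continuousOn
  have huU : ∀ x ∈ Set.Icc (-1:ℝ) 1, u x = U x := hu
  refine ⟨?_, ?_⟩
  · rw [← Set.uIcc_of_le h11]
    exact hUc.congr (by rw [Set.uIcc_of_le h11]; exact huU)
  have e1 : ∫ r in (-1:ℝ)..1, (g r ^ 2 + V r * u r ^ 2)
      = ∫ r in (-1:ℝ)..1, (g r ^ 2 + V r * U r ^ 2) := by
    apply intervalIntegral.integral_congr
    intro x hx
    rw [Set.uIcc_of_le h11] at hx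
    simp only [huU x hx]
  rw [e1, huU 1 (by simp), huU (-1) (by simp)]
  have e2 := hFac.integral_deriv_eq_sub
  have e3 : W 1 * U 1 ^ 2 - W (-1) * U (-1) ^ 2 =
    ∫ r in (-1:ℝ)..1, deriv (fun r => U r * U r * W r) r := by rw [e2]; ring
  rw [e3]
  apply intervalIntegral.integral_mono_ae_restrict h11 hFac.intervalIntegrable_deriv
  · exact hg2.add ((hV.continuousOn.mul (hUc.pow 2)).intervalIntegrable)
  · rw [EventuallyLE, ae_restrict_iff' measurableSet_Icc]
    filter_upwards [hg.ae_hasDerivAt_integral] with x hx hxm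
    have hx' := hx (by rwa [Set.uIcc_of_le h11]) (-1) (by simp)
    have hdU : HasDerivAt U (g x) x := hx'.const_add _
    have hdW : HasDerivAt W (deriv W x) x :=
      (hW.differentiable (by norm_num) x).hasDerivAt
    have := (hdU.mul hdU).mul hdW
    have h2 : deriv (fun r => U r * U r * W r) x = _ := this.deriv
    rw [h2]
    have h3 := mul_le_mul_of_nonneg_right (hWV x hxm) (sq_nonneg (U x))
    simp only [Pi.mul_apply]
    nlinarith [sq_nonneg (g x - U x * W x)]

lemma aux_alg (a b ρ s : ℝ) (hs : s ^ 2 = 2) :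
    -s * (6 * ρ ^ 2 - a ^ 2 - b ^ 2) * (s / 2 * (ρ ^ 2 - a ^ 2) * (b ^ 2 - ρ ^ 2))
      + (-s * ρ * (2 * ρ ^ 2 - a ^ 2 - b ^ 2)) ^ 2 = fA a b ρ := by
  unfold fA
  have : s * s = 2 := by rw [← hs]; ring
  linear_combination ((6 * ρ ^ 2 - a ^ 2 - b ^ 2) * (ρ ^ 2 - a ^ 2) * (ρ ^ 2 - b ^ 2) / 2
    + ρ ^ 2 * (2 * ρ ^ 2 - a ^ 2 - b ^ 2) ^ 2) * hs

lemma aux_p (K s ω p T τ : ℝ) (hp : 0 < p) (hpK : p ≤ 3 / 2 * K) (hs : s ≤ 3 / 10 * K)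
    (hω : ω ≤ T) (hK : K ≤ T) (hs0 : 0 ≤ τ)
    (h : ω ≤ -(9 / 10) * K ∨ p * (5 * T) ≤ τ) : p * (s + 2 * ω + p) ≤ τ := by
  rcases h with h | h
  · have : s + 2 * ω + p ≤ 0 := by linarith
    nlinarith
  · have : s + 2 * ω + p ≤ 5 * T := by nlinarith
    nlinarith

set_option maxHeartbeats 1600000 in
lemma aux_w (a b : ℝ) (ha : 0 < a) (hab : a < b)
    (ρ₀ : ℝ → ℝ) (hreg : ContDiff ℝ 1 ρ₀)
    (hderiv : ∀ z, deriv ρ₀ z =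
      Real.sqrt 2 / 2 * ((ρ₀ z) ^ 2 - a ^ 2) * (b ^ 2 - (ρ₀ z) ^ 2))
    (hbnd : ∀ z, a < ρ₀ z ∧ ρ₀ z < b)
    (hbot : Filter.Tendsto ρ₀ Filter.atBot (nhds a))
    (htop : Filter.Tendsto ρ₀ Filter.atTop (nhds b)) :
    ∃ X ≥ (1:ℝ), ∃ c > (0:ℝ), ∀ x ≥ X, ∃ w : ℝ → ℝ, ContDiff ℝ 1 w ∧
      (∀ z ∈ Set.Icc (-x) x, deriv w z + w z ^ 2 ≤ fA a b (ρ₀ z) + (x ^ 2)⁻¹) ∧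
      c ≤ w x ∧ w (-x) ≤ -c := by
  set σ := Real.sqrt 2 with hσ
  have hσ2 : σ ^ 2 = 2 := Real.sq_sqrt (by norm_num)
  have hσ0 : 0 < σ := Real.sqrt_pos.mpr (by norm_num)
  set ω : ℝ → ℝ := fun z => -σ * ρ₀ z * (2 * ρ₀ z ^ 2 - a ^ 2 - b ^ 2) with hω
  have hb : 0 < b := ha.trans hab
  have hD : 0 < b ^ 2 - a ^ 2 := by nlinarith
  set Ka := σ * a * (b ^ 2 - a ^ 2) with hKa
  set Kb := σ * b * (b ^ 2 - a ^ 2) with hKb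
  have hKa0 : 0 < Ka := by positivity
  have hKb0 : 0 < Kb := by positivity
  have hKab : Ka ≤ Kb := by
    rw [hKa, hKb]; gcongr
  have hωb : ∀ z, |ω z| ≤ Kb := by
    intro z
    obtain ⟨h1, h2⟩ := hbnd z
    have : |2 * ρ₀ z ^ 2 - a ^ 2 - b ^ 2| ≤ b ^ 2 - a ^ 2 := by
      rw [abs_le]; constructor <;> nlinarith
    rw [hω]; simp only [abs_mul, abs_neg]
    rw [abs_of_pos hσ0, abs_of_pos (ha.trans h1), hKb]
    gcongr
  have hωtop : Tendsto ω atTop (nhds (-Kb)) := by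
    have := ((htop.const_mul (-σ)).mul ((((htop.pow 2).const_mul 2).sub_const (a^2)).sub_const (b^2)))
    convert this using 2
    rw [hKb]; ring
  have hωbot : Tendsto ω atBot (nhds Ka) := by
    have := ((hbot.const_mul (-σ)).mul ((((hbot.pow 2).const_mul 2).sub_const (a^2)).sub_const (b^2)))
    convert this using 2
    rw [hKa]; ring
  obtain ⟨R1, hR1⟩ := eventually_atTop.mp
    (hωtop.eventually (Iio_mem_nhds (show -Kb < -(9/10) * Kb by linarith)))
  obtain ⟨R2, hR2⟩ := eventually_atBot.mp
    (hωbot.eventually (Ioo_mem_nhds (show 9/10 * Ka < Ka by linarith)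
      (show Ka < 11/10 * Ka by linarith)))
  set R := max 1 (max R1 (-R2)) with hR
  have hRa : ∀ z ≥ R, ω z ≤ -(9/10) * Kb := fun z hz =>
    (hR1 z ((le_max_left _ _).trans ((le_max_right _ _).trans hz))).le
  have hRb : ∀ z ≤ -R, 9/10 * Ka < ω z ∧ ω z < 11/10 * Ka := fun z hz =>
    hR2 z (by
      have : -R2 ≤ R := (le_max_right _ _).trans (le_max_right _ _)
      linarith)
  have hR1' : 1 ≤ R := le_max_left _ _
  set s := 3/10 * Ka with hs
  have hs0 : 0 < s := by positivity
  have hlim : Tendsto (fun x : ℝ => x ^ 2 * Real.exp (-s * x)) atTop (nhds 0) := by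
    have := tendsto_rpow_mul_exp_neg_mul_atTop_nhds_zero 2 s hs0
    simpa using this
  set τ := min (1 / (15 * Kb ^ 2 * Real.exp (s * R))) (Ka / (15 * Kb)) with hτ
  have hτ0 : 0 < τ := by positivity
  obtain ⟨X0, hX0⟩ := eventually_atTop.mp (hlim.eventually (Iio_mem_nhds hτ0))
  refine ⟨max R X0, hR1'.trans (le_max_left _ _), 3/10 * Ka, by positivity, ?_⟩
  intro x hx
  have hxR : R ≤ x := (le_max_left _ _).trans hx
  have hx1 : 1 ≤ x := hR1'.trans hxR
  have hE : x ^ 2 * Real.exp (-s * x) < τ := hX0 x ((le_max_right _ _).trans hx)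
  set E := Real.exp (-s * x) with hEdef
  have hE0 : 0 < E := Real.exp_pos _
  have hE1 : 15 * Kb * E ≤ Ka := by
    have h1 : E ≤ x ^ 2 * E := le_mul_of_one_le_left hE0.le (one_le_pow₀ hx1)
    have h2 : E ≤ Ka / (15 * Kb) := (h1.trans hE.le).trans (min_le_right _ _)
    rw [le_div_iff₀ (by positivity)] at h2
    linarith
  have hE2 : 15 * Kb ^ 2 * Real.exp (s * R) * E ≤ (x ^ 2)⁻¹ := by
    have h2 : x ^ 2 * E ≤ 1 / (15 * Kb ^ 2 * Real.exp (s * R)) := hE.le.trans (min_le_left _ _)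
    rw [le_div_iff₀ (by positivity)] at h2
    rw [← one_div, le_div_iff₀ (by positivity)]
    linarith
  set p : ℝ → ℝ := fun z => 3/2 * Kb * Real.exp (s * z - s * x) with hp
  set q : ℝ → ℝ := fun z => 3/2 * Ka * Real.exp (-s * z - s * x) with hq
  have hp0 : ∀ z, 0 < p z := fun z => by positivity
  have hq0 : ∀ z, 0 < q z := fun z => by positivity
  have hEE : Real.exp (-s * x - s * x) ≤ E := by
    apply Real.exp_le_exp.mpr; nlinarith
  refine ⟨fun z => ω z + p z - q z, ?_, ?_, ?_, ?_⟩
  · simp only [hω, hp, hq]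
    fun_prop
  · intro z hz
    have hdρ : HasDerivAt ρ₀ (σ / 2 * ((ρ₀ z) ^ 2 - a ^ 2) * (b ^ 2 - (ρ₀ z) ^ 2)) z := by
      rw [← hderiv z]; exact (hreg.differentiable (by norm_num) z).hasDerivAt
    have hdω : HasDerivAt ω (-σ * (6 * ρ₀ z ^ 2 - a ^ 2 - b ^ 2) *
        (σ / 2 * ((ρ₀ z) ^ 2 - a ^ 2) * (b ^ 2 - (ρ₀ z) ^ 2))) z := by
      have := (hdρ.const_mul (-σ)).mul ((((hdρ.pow 2).const_mul 2).sub_const (a^2)).sub_const (b^2))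
      convert! this using 1
      simp; ring
    have hdp : HasDerivAt p (s * p z) z := by
      have := ((((hasDerivAt_id z).const_mul s).sub_const (s * x)).exp).const_mul (3/2 * Kb)
      convert! this using 1
      simp [hp]; ring
    have hdq : HasDerivAt q (-s * q z) z := by
      have := ((((hasDerivAt_id z).const_mul (-s)).sub_const (s * x)).exp).const_mul (3/2 * Ka)
      convert! this using 1
      simp [hq]; ring
    have hdw := ((hdω.add hdp).sub hdq).deriv
    have hdw' : deriv (fun z => ω z + p z - q z) z = _ := hdw
    rw [hdw']
    have halg := aux_alg a b (ρ₀ z) σ hσ2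
    change _ + (ω z) ^ 2 = _ at halg
    have hωz := abs_le.mp (hωb z)
    have hx2 : 0 < (x ^ 2)⁻¹ := by positivity
    have key : ∀ z', z' < R → 3/2 * Kb * Real.exp (s * z' - s * x) * (5 * Kb) ≤ (x ^ 2)⁻¹ / 2 := by
      intro z' hz'
      have h1 : Real.exp (s * z' - s * x) ≤ Real.exp (s * R) * E := by
        rw [hEdef, ← Real.exp_add]
        apply Real.exp_le_exp.mpr; nlinarith
      have h2 := mul_le_mul_of_nonneg_left h1 (show 0 ≤ 15/2 * Kb ^ 2 by positivity)
      linarith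
    have P := aux_p Kb s (ω z) (p z) Kb ((x ^ 2)⁻¹ / 2) (hp0 z)
      (by
        have : Real.exp (s * z - s * x) ≤ 1 := Real.exp_le_one_iff.mpr (by nlinarith [hz.2])
        simp only [hp]; nlinarith) (by linarith) hωz.2 le_rfl (by positivity)
      (by
        by_cases h : R ≤ z
        · exact Or.inl (hRa z h)
        · exact Or.inr (key z (not_le.mp h)))
    have Q := aux_p Ka s (-ω z) (q z) Kb ((x ^ 2)⁻¹ / 2) (hq0 z)
      (by
        have : Real.exp (-s * z - s * x) ≤ 1 := Real.exp_le_one_iff.mpr (by nlinarith [hz.1])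
        simp only [hq]; nlinarith) (by linarith) (by linarith) hKab (by positivity)
      (by
        by_cases h : z ≤ -R
        · exact Or.inl (by linarith [(hRb z h).1])
        · refine Or.inr (le_trans ?_ (key (-z) (by linarith)))
          have : s * -z - s * x = -s * z - s * x := by ring
          rw [this]
          simp only [hq]; gcongr)
    linarith [mul_pos (hp0 z) (hq0 z)]
  · have h1 : p x = 3/2 * Kb := by simp [hp]
    have h2 : q x ≤ 3/2 * Ka * E := by simp only [hq]; gcongr
    have h3 := (abs_le.mp (hωb x)).1
    have h4 : Ka * E ≤ Kb * E := by gcongr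
    simp only [h1]
    linarith
  · have h1 : q (-x) = 3/2 * Ka := by simp [hq]
    have h2 : p (-x) ≤ 3/2 * Kb * E := by
      simp only [hp]
      rw [show s * -x = -s * x by ring]
      gcongr
    have h3 := (hRb (-x) (by linarith)).2
    simp only [h1]
    linarith

/-- There exist `ε₀, C > 0` such that for all `ε ∈ (0, ε₀)` and every
`u ∈ H¹([−1,1])` (i.e. `u` absolutely continuous with derivative `g ∈ L²([−1,1])`),
`u(1)² + u(−1)² ≤ C ε (Q₀(u) + ∫_{−1}^{1} u²)`. -/
theorem statement18 (a b α : ℝ) (ha : 0 < a) (hab : a < b)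
    (hα : 0 < α)
    (hα' : α < min (Real.sqrt 2 * (b ^ 2 - a ^ 2) * a) (Real.sqrt 2 * (b ^ 2 - a ^ 2) * b))
    (ρ₀ : ℝ → ℝ) (hreg : ContDiff ℝ 1 ρ₀)
    (hderiv : ∀ z, deriv ρ₀ z =
      Real.sqrt 2 / 2 * ((ρ₀ z) ^ 2 - a ^ 2) * (b ^ 2 - (ρ₀ z) ^ 2))
    (hbnd : ∀ z, a < ρ₀ z ∧ ρ₀ z < b)
    (hbot : Filter.Tendsto ρ₀ Filter.atBot (nhds a))
    (htop : Filter.Tendsto ρ₀ Filter.atTop (nhds b))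
    (hnorm : b * Real.log ((ρ₀ 0 - a) / (ρ₀ 0 + a))
      - a * Real.log ((b - ρ₀ 0) / (b + ρ₀ 0)) = 0) :
    ∃ ε₀ > (0:ℝ), ∃ C > (0:ℝ), ∀ ε ∈ Set.Ioo (0:ℝ) ε₀, ∀ u g : ℝ → ℝ,
      IntervalIntegrable g volume (-1) 1 →
      IntervalIntegrable (fun r => (g r) ^ 2) volume (-1) 1 →
      (∀ x ∈ Set.Icc (-1:ℝ) 1, u x = u (-1) + ∫ t in (-1:ℝ)..x, g t) →
      (u 1) ^ 2 + (u (-1)) ^ 2 ≤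
        C * ε * (Q0 a b ε ρ₀ u g + ∫ r in (-1:ℝ)..1, (u r) ^ 2) := by
  obtain ⟨X, hX1, c, hc, H⟩ := aux_w a b ha hab ρ₀ hreg hderiv hbnd hbot htop
  have hX0 : 0 < X := by linarith
  refine ⟨1 / X, by positivity, 1 / c, by positivity, ?_⟩
  rintro ε ⟨hε0, hε⟩ u g hg hg2 hu
  obtain ⟨w, hw, hwV, hw1, hw2⟩ := H (1 / ε) (by
    rw [ge_iff_le, le_div_iff₀ hε0]
    rw [lt_div_iff₀ hX0] at hε
    linarith)
  have hVc : Continuous (fun r => (ε ^ 2)⁻¹ * fA a b (ρ₀ (r / ε))) := by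
    have := hreg.continuous
    unfold fA
    fun_prop
  obtain ⟨huc, hI⟩ := aux_int (fun r => ε⁻¹ * w (r * ε⁻¹))
    (fun r => (ε ^ 2)⁻¹ * fA a b (ρ₀ (r / ε)) + 1) u g (by fun_prop) (by fun_prop)
    (by
      intro r hr
      have hd : HasDerivAt (fun r => ε⁻¹ * w (r * ε⁻¹)) (ε⁻¹ * (deriv w (r * ε⁻¹) * ε⁻¹)) r := by
        have h1 : HasDerivAt w (deriv w (r * ε⁻¹)) (r * ε⁻¹) :=
          (hw.differentiable (by norm_num) _).hasDerivAt
        have h2 : HasDerivAt (fun r : ℝ => r * ε⁻¹) ε⁻¹ r := by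
          simpa using (hasDerivAt_id r).mul_const ε⁻¹
        exact (h1.comp r h2).const_mul _
      rw [hd.deriv]
      have hi : 0 < ε⁻¹ := by positivity
      have h3 := hwV (r * ε⁻¹) ⟨by rw [one_div]; nlinarith [hr.1], by rw [one_div]; nlinarith [hr.2]⟩
      have h4 := mul_le_mul_of_nonneg_left h3 (show 0 ≤ (ε ^ 2)⁻¹ by positivity)
      have h5 : (ε ^ 2)⁻¹ * ((1 / ε) ^ 2)⁻¹ = 1 := by field_simp
      rw [mul_add, mul_add, h5] at h4
      rw [div_eq_mul_inv r ε]
      refine le_trans (le_of_eq ?_) h4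
      rw [← inv_pow]; ring) hg hg2 hu
  have h11 : (-1:ℝ) ≤ 1 := by norm_num
  have huc' : ContinuousOn u (Set.uIcc (-1:ℝ) 1) := by rwa [Set.uIcc_of_le h11]
  have hsum : Q0 a b ε ρ₀ u g + ∫ r in (-1:ℝ)..1, (u r) ^ 2 =
      ∫ r in (-1:ℝ)..1, (g r ^ 2 + ((ε ^ 2)⁻¹ * fA a b (ρ₀ (r / ε)) + 1) * u r ^ 2) := by
    unfold Q0
    rw [← intervalIntegral.integral_add]
    · congr 1; ext r; ring
    · exact hg2.add ((hVc.continuousOn.mul (huc'.pow 2)).intervalIntegrable)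
    · exact (huc'.pow 2).intervalIntegrable
  rw [← hsum] at hI
  set S := Q0 a b ε ρ₀ u g + ∫ r in (-1:ℝ)..1, (u r) ^ 2
  simp only [one_mul, neg_mul] at hI
  rw [one_div] at hw1 hw2
  have hi : 0 < ε⁻¹ := by positivity
  have h6 : ε⁻¹ * (c * (u 1 ^ 2 + u (-1) ^ 2)) ≤ S := by
    refine le_trans ?_ hI
    have m1 := mul_le_mul_of_nonneg_right hw1 (sq_nonneg (u 1))
    have m2 := mul_le_mul_of_nonneg_right hw2 (sq_nonneg (u (-1)))
    have m3 : c * (u 1 ^ 2 + u (-1) ^ 2) ≤ w ε⁻¹ * u 1 ^ 2 - w (-ε⁻¹) * u (-1) ^ 2 := by linarith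
    have m4 := mul_le_mul_of_nonneg_left m3 hi.le
    linarith
  have h7 := mul_le_mul_of_nonneg_left h6 (show 0 ≤ 1 / c * ε by positivity)
  refine le_trans (le_of_eq ?_) h7
  field_simp
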